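/- Let k ≥ 3 and n_1, …, n_k be positive integers, let t be the number of indices i with n_i odd, let I_1 = {i : n_i = 1}, and let I_2 = {i : n_i = 2}. If t = 2 and |I_1| + |I_2| ≤ 1, then the signed domination number of the complete k-partite graph K_{n_1,…,n_k} equals 4. -/

import Mathlib

open scoped Classical

/-- The signed domination number of a finite simple graph `G`: the minimum weight of a
function `f : V → {−1, 1}` such that `f(N[v]) ≥ 1` for every vertex `v`. -/
noncomputable def signedDomNum {V : Type*} [Fintype V] (G : SimpleGraph V) : ℤ :=
  sInf {w : ℤ | ∃ f : V → ℤ, (∀ v, f v = 1 ∨ f v = -1) ∧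
    (∀ v, 1 ≤ f v + ∑ u ∈ G.neighborFinset v, f u) ∧ w = ∑ v, f v}

/-- A sum of `±1` signs over a finite type is congruent modulo two to the number of terms. -/
theorem two_dvd_sum_sign_sub_card {ι : Type*} [Fintype ι] (f : ι → ℤ)
    (hf : ∀ v, f v = 1 ∨ f v = -1) : (2 : ℤ) ∣ ∑ v, f v - Fintype.card ι := by
  have h : ∑ v, f v - (Fintype.card ι : ℤ) = ∑ v, (f v - 1) := by
    simp [Finset.sum_sub_distrib]
  rw [h]
  refine Finset.dvd_sum fun v _ => ?_
  rcases hf v with h | h <;> simp [h]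

/-- Every integer of the right parity between `0` and `m` is a sum of `m` signs. -/
theorem exists_sign_sum_eq (m s : ℕ) (hs : s ≤ m) (hpar : Even (m + s)) :
    ∃ f : Fin m → ℤ, (∀ v, f v = 1 ∨ f v = -1) ∧ ∑ v, f v = s := by
  obtain ⟨a, ha⟩ := hpar
  refine ⟨fun v => if (v : ℕ) < a then 1 else -1, fun v => ?_, ?_⟩
  · by_cases h : (v : ℕ) < a <;> simp [h]
  · rw [Fin.sum_univ_eq_sum_range (fun v => if v < a then (1 : ℤ) else -1) m,
      ← Finset.sum_range_add_sum_Ico _ (show a ≤ m by omega),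
      Finset.sum_congr rfl (g := fun _ => (1 : ℤ))
        (fun v hv => if_pos (Finset.mem_range.mp hv)),
      Finset.sum_congr rfl (g := fun _ => (-1 : ℤ))
        (fun v hv => if_neg (by have := Finset.mem_Ico.mp hv; omega))]
    simp
    omega

/-- In a complete multipartite graph the neighbours of `v` are the vertices outside its part. -/
theorem sum_neighborFinset_completeMultipartiteGraph {k : ℕ} (n : Fin k → ℕ)
    (f : (Σ i, Fin (n i)) → ℤ) (v : Σ i, Fin (n i))
    [Fintype ((SimpleGraph.completeMultipartiteGraph fun i : Fin k => Fin (n i)).neighborSet v)] :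
    ∑ u ∈ (SimpleGraph.completeMultipartiteGraph fun i : Fin k => Fin (n i)).neighborFinset v, f u
      = ∑ i, ∑ x, f ⟨i, x⟩ - ∑ x, f ⟨v.1, x⟩ := by
  have h : (SimpleGraph.completeMultipartiteGraph fun i : Fin k => Fin (n i)).neighborFinset v
      = (Finset.univ.erase v.1).sigma fun _ => Finset.univ := by
    ext u
    simp [SimpleGraph.completeMultipartiteGraph, eq_comm]
  rw [h, Finset.sum_sigma, ← Finset.add_sum_erase Finset.univ _ (Finset.mem_univ v.1)]
  ring

/-- Lower bound on the total of the part sums of a signed dominating function. -/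
theorem four_le_sum_of_part_bounds (k : ℕ) (hk : 3 ≤ k) (n : Fin k → ℕ) (hn : ∀ i, 0 < n i)
    (ht : (Finset.univ.filter fun i => Odd (n i)).card = 2)
    (hI : (Finset.univ.filter fun i => n i = 1).card
      + (Finset.univ.filter fun i => n i = 2).card ≤ 1)
    (s : Fin k → ℤ) (hpar : ∀ i, (2 : ℤ) ∣ s i - n i)
    (hs : ∀ i, s i ≤ ∑ j, s j - 2 ∨ (s i = n i ∧ s i ≤ ∑ j, s j)) :
    4 ≤ ∑ j, s j := by
  have heven : (2 : ℤ) ∣ ∑ j, s j := by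
    have h₁ : (2 : ℤ) ∣ ∑ j, (s j - n j) := Finset.dvd_sum fun i _ => hpar i
    have h₂ : Even (∑ j, n j) := by
      rw [Finset.even_sum_iff_even_card_odd, ht]
      exact even_two
    rw [Finset.sum_sub_distrib] at h₁
    have h₃ : (2 : ℤ) ∣ ∑ j, (n j : ℤ) := by exact_mod_cast h₂.two_dvd
    exact (dvd_sub_left h₃).mp h₁
  set w := ∑ j, s j with hw
  by_contra! hlt
  have hw₂ : w ≤ 2 := by omega
  have hw₀ : w ≤ 0 := by
    have hle : w ≤ ∑ i, (2 * (if n i = 1 then 1 else 0) + 2 * (if n i = 2 then 1 else 0)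
        - (if Odd (n i) then (1 : ℤ) else 0)) := by
      refine Finset.sum_le_sum fun i _ => ?_
      have h₁ := hpar i
      have h₂ := hs i
      have h₃ := hn i
      simp only [Nat.odd_iff]
      split_ifs <;> omega
    rw [Finset.sum_sub_distrib, Finset.sum_add_distrib, ← Finset.mul_sum, ← Finset.mul_sum,
      Finset.sum_boole, Finset.sum_boole, Finset.sum_boole, ht] at hle
    push_cast at hle
    omega
  have hle : w ≤ ∑ _i : Fin k, (w - 2) := Finset.sum_le_sum fun i _ => by
    have h₂ := hs i
    have h₃ := hn i
    omega
  simp only [Finset.sum_const, Finset.card_univ, Fintype.card_fin, nsmul_eq_mul] at hle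
  have hk' : (3 : ℤ) ≤ k := by exact_mod_cast hk
  nlinarith

/-- Part sums, each at most two and of the right parity, with total four. -/
theorem exists_part_sums (k : ℕ) (hk : 3 ≤ k) (n : Fin k → ℕ) (hn : ∀ i, 0 < n i)
    (ht : (Finset.univ.filter fun i => Odd (n i)).card = 2) :
    ∃ s : Fin k → ℕ, (∀ i, s i ≤ n i ∧ s i ≤ 2 ∧ Even (n i + s i)) ∧ ∑ i, s i = 4 := by
  obtain ⟨e, he⟩ : ∃ e, ¬ Odd (n e) := by
    by_contra! h
    rw [Finset.filter_true_of_mem fun i _ => h i, Finset.card_univ, Fintype.card_fin] at ht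
    omega
  refine ⟨fun i => (if Odd (n i) then 1 else 0) + if i = e then 2 else 0, fun i => ?_, ?_⟩
  · have h := hn i
    rw [Nat.odd_iff] at he
    simp only [Nat.odd_iff, Nat.even_iff]
    by_cases hi : i = e
    · subst hi
      split_ifs <;> omega
    · split_ifs <;> omega
  · rw [Finset.sum_add_distrib, Finset.sum_boole, ht]
    simp

theorem signedDomNum_eq_four_t_two
    (k : ℕ) (hk : 3 ≤ k) (n : Fin k → ℕ) (hn : ∀ i, 0 < n i)
    (ht : (Finset.univ.filter fun i => Odd (n i)).card = 2)
    (hI : (Finset.univ.filter fun i => n i = 1).card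
      + (Finset.univ.filter fun i => n i = 2).card ≤ 1) :
    signedDomNum (SimpleGraph.completeMultipartiteGraph fun i : Fin k => Fin (n i)) = 4 := by
  refine IsLeast.csInf_eq ⟨?_, ?_⟩
  · obtain ⟨s, hs, hsum⟩ := exists_part_sums k hk n hn ht
    choose g hg hgs using fun i => exists_sign_sum_eq (n i) (s i) (hs i).1 (hs i).2.2
    have htotal : ∑ i, ∑ x, g i x = 4 := by
      simp only [hgs]
      exact_mod_cast hsum
    refine ⟨fun v => g v.1 v.2, fun v => hg v.1 v.2, fun v => ?_, ?_⟩
    · rw [sum_neighborFinset_completeMultipartiteGraph]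
      rw [htotal, hgs]
      have h₁ := (hs v.1).2.1
      rcases hg v.1 v.2 with h | h <;> simp only [h] <;> omega
    · rw [Fintype.sum_sigma, htotal]
  · rintro w ⟨f, hf, hdom, rfl⟩
    rw [Fintype.sum_sigma]
    refine four_le_sum_of_part_bounds k hk n hn ht hI (fun i => ∑ x, f ⟨i, x⟩) (fun i => ?_)
      fun i => ?_
    · simpa using two_dvd_sum_sign_sub_card (fun x => f ⟨i, x⟩) fun x => hf ⟨i, x⟩
    · simp only [sum_neighborFinset_completeMultipartiteGraph] at hdom
      by_cases h : ∃ x, f ⟨i, x⟩ = -1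
      · obtain ⟨x, hx⟩ := h
        have := hdom ⟨i, x⟩
        left
        simp only [hx] at this
        linarith
      · push Not at h
        have hone : ∀ x, f ⟨i, x⟩ = 1 := fun x => (hf ⟨i, x⟩).resolve_right (h x)
        have := hdom ⟨i, ⟨0, hn i⟩⟩
        rw [hone] at this
        right
        refine ⟨by simp [hone], ?_⟩
        simp only at this
        linarith
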